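/- Let f be a convex real-valued function on the space of conditional probability tables of an N-partite Bell scenario in which the first N−1 parties each have two measurement settings with two outcomes (the N-th party arbitrary finite settings and outcomes). Then the supremum of f over the set of ALL quantum correlations of the scenario equals the supremum of f over the set of quantum correlations generated by POVM measurements on a pure state whose first N−1 local Hilbert space dimensions equal 2 and whose last local Hilbert space dimension equals 2^{N−1}. -/

import Mathlib

/- STATEMENT 12: let `f` be a convex function on the space of conditional probability
tables of an (n+1)-partite Bell scenario in which the first n parties each have two
settings with two outcomes (the last party having arbitrary finite numbers of settings and
outcomes).  Then the supremum of `f` over ALL quantum correlations of the scenario equals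
the supremum of `f` over quantum correlations generated by POVM measurements on a pure
state whose first n local Hilbert space dimensions equal 2 and whose last local dimension
equals `2 ^ n`. -/

open scoped BigOperators Kronecker Matrix ComplexOrder

noncomputable section

/-- `N`-fold tensor (Kronecker) product of square matrices, realized as a matrix on the
product index set: `(⊗ᵢ Mᵢ) (r, c) = ∏ i, Mᵢ (r i) (c i)`. -/
def tensorN {N : ℕ} (d : Fin N → ℕ) (M : ∀ i, Matrix (Fin (d i)) (Fin (d i)) ℂ) :
    Matrix (∀ i, Fin (d i)) (∀ i, Fin (d i)) ℂ :=
  Matrix.of fun r c => ∏ i, M i (r i) (c i)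

/-- A POVM: a finite family of positive semidefinite matrices summing to the identity. -/
def IsPOVM {n : Type*} [Fintype n] [DecidableEq n] {O : Type*} [Fintype O]
    (M : O → Matrix n n ℂ) : Prop :=
  (∀ a, (M a).PosSemidef) ∧ ∑ a, M a = 1

/-- A density matrix: positive semidefinite with unit trace. -/
def IsDensityMatrix {n : Type*} [Fintype n] [DecidableEq n] (ρ : Matrix n n ℂ) : Prop :=
  ρ.PosSemidef ∧ ρ.trace = 1

/-- `Realizes x o d P`: the behaviour `P settings outcomes = P(a₁…a_N | x₁…x_N)` of the
`N`-partite Bell scenario in which party `i` has `x i` settings and `o i` outcomes is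
realized by a density matrix and local POVMs, party `i` having local Hilbert space
dimension `d i`. -/
def Realizes {N : ℕ} (x o : Fin N → ℕ) (d : Fin N → ℕ)
    (P : (∀ i, Fin (x i)) → (∀ i, Fin (o i)) → ℝ) : Prop :=
  ∃ ρ : Matrix (∀ i, Fin (d i)) (∀ i, Fin (d i)) ℂ,
    IsDensityMatrix ρ ∧
    ∃ M : ∀ i, Fin (x i) → Fin (o i) → Matrix (Fin (d i)) (Fin (d i)) ℂ,
      (∀ i xi, IsPOVM (M i xi)) ∧
      ∀ xs as, (P xs as : ℂ) = (ρ * tensorN d fun i => M i (xs i) (as i)).trace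

/-- Realization by a pure state `ψ` (with `ρ = |ψ⟩⟨ψ|`) and local POVMs. -/
def RealizesPure {N : ℕ} (x o : Fin N → ℕ) (d : Fin N → ℕ)
    (P : (∀ i, Fin (x i)) → (∀ i, Fin (o i)) → ℝ) : Prop :=
  ∃ ψ : (∀ i, Fin (d i)) → ℂ,
    (∑ p, Complex.normSq (ψ p)) = 1 ∧
    ∃ M : ∀ i, Fin (x i) → Fin (o i) → Matrix (Fin (d i)) (Fin (d i)) ℂ,
      (∀ i xi, IsPOVM (M i xi)) ∧
      ∀ xs as, (P xs as : ℂ) =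
        (Matrix.vecMulVec ψ (star ψ) * tensorN d fun i => M i (xs i) (as i)).trace

/-- The set of all quantum correlations of the `N`-partite Bell scenario with `x i`
settings and `o i` outcomes for party `i`, with no restriction on the local Hilbert
space dimensions. -/
def QuantumSet {N : ℕ} (x o : Fin N → ℕ) :
    Set ((∀ i, Fin (x i)) → (∀ i, Fin (o i)) → ℝ) :=
  {P | ∃ d, Realizes x o d P}

/-!
The set of quantum correlations lies in the convex hull of the set of correlations realized by a
pure state with local dimensions `(2, ..., 2, 2 ^ n)` (`quantumSet_subset_convexHull`). Since a
convex function on a convex hull is dominated by its values on the generating set, both images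
under `f` have the same upper bounds, hence the same supremum.

The inclusion combines three facts.

* Two dichotomic measurements with effects `E`, `F` are convex combinations of qubit
  measurements: there are maps `V k` into `ℂ²` with `∑ k, (V k)ᴴ * V k = 1` which pull qubit
  measurements back to the given ones (`exists_qubit_povm_decomposition`). To see this, dilate
  `2 E - 1` and `2 F - 1` to reflections `A`, `B`, and let `Q z` be the spectral projections of
  the unitary `A B`. Each vector `v` in the range of some `Q z` spans together with `B v` a
  subspace of dimension at most two invariant under `A` and `B`, on which they act as a
  compression of qubit reflections. These subspaces
  need not be orthogonal to each other: the rows of all the `Q z`, each paired with its image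
  under `B` and scaled by `1 / √2`, already form a Parseval frame.
* Seen from the first `n` parties, the last party prepares ensembles `S y a` with a common sum
  `T`, independent of its setting `y` (`trace_mul_tensorN`). Conjugating by the tensor products
  `W k` of the maps `V` splits the correlation into pieces of weight `tr (W k * T * (W k)ᴴ)`, in
  each of which the first `n` parties measure qubits.
* Ensembles with common average `T` on a space of dimension `2 ^ n` arise from measurements on
  the second half of the purification `√T` of `T`, whose dimension is again `2 ^ n`
  (`realizesPure_of_assemblage`).
-/

/-! ### Functional calculus for matrices -/

lemma spectrum_nonneg_of_posSemidef {m : Type} [Fintype m] [DecidableEq m] {A : Matrix m m ℂ}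
    (hA : A.PosSemidef) {t : ℝ} (ht : t ∈ spectrum ℝ A) : 0 ≤ t := by
  rw [hA.isHermitian.spectrum_real_eq_range_eigenvalues] at ht
  obtain ⟨i, rfl⟩ := ht
  exact hA.eigenvalues_nonneg i

lemma spectrum_le_one_of_posSemidef {m : Type} [Fintype m] [DecidableEq m] {A : Matrix m m ℂ}
    (hA : (1 - A).PosSemidef) {t : ℝ} (ht : t ∈ spectrum ℝ A) : t ≤ 1 := by
  have h : 1 - t ∈ spectrum ℝ (1 - A) := by
    have := spectrum.singleton_sub_eq (R := ℝ) A 1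
    rw [map_one] at this
    rw [← this]
    exact Set.sub_mem_sub rfl ht
  linarith [spectrum_nonneg_of_posSemidef hA h]

lemma cfc_isHermitian {m : Type} [Fintype m] [DecidableEq m] (A : Matrix m m ℂ) (g : ℝ → ℝ) :
    (cfc g A).IsHermitian := cfc_predicate g A

lemma continuousOn_spectrum_matrix {m : Type} [Fintype m] [DecidableEq m] (A : Matrix m m ℂ)
    (g : ℝ → ℝ) : ContinuousOn g (spectrum ℝ A) :=
  (Matrix.finite_real_spectrum (A := A)).continuousOn g

lemma cfc_mul_matrix {m : Type} [Fintype m] [DecidableEq m] (A : Matrix m m ℂ) (g h : ℝ → ℝ) :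
    cfc g A * cfc h A = cfc (fun t => g t * h t) A :=
  (cfc_mul g h A (continuousOn_spectrum_matrix A g) (continuousOn_spectrum_matrix A h)).symm

/-! ### Qubit decomposition of a pair of dichotomic measurements -/

/-- For an effect `E` (that is, `0 ≤ E ≤ 1`), the observable `2 E - 1` is a corner of a
self-adjoint unitary, namely `[[2E - 1, 2S], [2S, 1 - 2E]]` with `S = √(E (1 - E))`. -/
lemma exists_reflection_dilation {m : Type} [Fintype m] [DecidableEq m] {E : Matrix m m ℂ}
    (hE : E.PosSemidef) (hE' : (1 - E).PosSemidef) :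
    ∃ A : Matrix (m ⊕ m) (m ⊕ m) ℂ, A.IsHermitian ∧ A * A = 1 ∧
      A.submatrix Sum.inl Sum.inl = E + E - 1 := by
  have hs : IsSelfAdjoint E := hE.isHermitian
  set S : Matrix m m ℂ := cfc (fun t : ℝ => √(t * (1 - t))) E with hS
  have hSH : Sᴴ = S := cfc_isHermitian _ _
  have hid : cfc (fun t : ℝ => t) E = E := cfc_id' ℝ E
  have hcomm : E * S = S * E := by
    have h1 : E * S = cfc (fun t : ℝ => t) E * S := by rw [hid]
    have h2 : S * E = S * cfc (fun t : ℝ => t) E := by rw [hid]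
    rw [h1, h2, hS, cfc_mul_matrix, cfc_mul_matrix]
    simp only [mul_comm]
  have hsq : S * S = E - E * E := by
    have h1 : S * S = cfc (fun t : ℝ => t - t * t) E := by
      rw [hS, cfc_mul_matrix]
      refine cfc_congr fun t ht => ?_
      have h0 := spectrum_nonneg_of_posSemidef hE ht
      have h1 := spectrum_le_one_of_posSemidef hE' ht
      rw [Real.mul_self_sqrt (mul_nonneg h0 (by linarith))]
      ring
    rw [h1, cfc_sub (fun t : ℝ => t) (fun t => t * t) E (continuousOn_spectrum_matrix _ _)
      (continuousOn_spectrum_matrix _ _), ← cfc_mul_matrix, hid]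
  refine ⟨Matrix.fromBlocks (E + E - 1) (S + S) (S + S) (1 - E - E), ?_, ?_, ?_⟩
  · have hEH : Eᴴ = E := hE.isHermitian
    rw [Matrix.IsHermitian, Matrix.fromBlocks_conjTranspose]
    simp [hSH, hEH]
  · rw [Matrix.fromBlocks_multiply, ← Matrix.fromBlocks_one]
    congr 1 <;> noncomm_ring <;> simp only [hsq, hcomm] <;> abel_nf
  · ext i j; simp

section Unitary
open Matrix.Norms.L2Operator

/-- A unitary matrix is a combination of projections `Q z`, which sum to the identity, with
coefficients `z` of modulus one. The condition `(Q z)ᴴ * Q z = Q z` says that `Q z` is an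
orthogonal projection. -/
lemma exists_spectral_resolution {m : Type} [Fintype m] [DecidableEq m] {U : Matrix m m ℂ}
    (hU : U ∈ unitary (Matrix m m ℂ)) :
    ∃ (s : Finset ℂ) (Q : ℂ → Matrix m m ℂ), (∀ z ∈ s, z * star z = 1) ∧
      (∀ z, (Q z)ᴴ * Q z = Q z) ∧ ∑ z ∈ s, Q z = 1 ∧ ∑ z ∈ s, z • Q z = U := by
  have hN : IsStarNormal U := ⟨by rw [Commute, SemiconjBy, hU.1, hU.2]⟩
  have hfin : (spectrum ℂ U).Finite := Matrix.finite_spectrum U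
  have hc : ∀ g : ℂ → ℂ, ContinuousOn g (spectrum ℂ U) := fun g => hfin.continuousOn g
  refine ⟨hfin.toFinset, fun z => cfc (fun w : ℂ => if w = z then 1 else 0) U, ?_, ?_, ?_, ?_⟩
  · intro z hz
    have h := spectrum.norm_eq_one_of_unitary hU (by simpa using hz)
    rw [Complex.star_def, Complex.mul_conj, Complex.normSq_eq_norm_sq, h]; simp
  · intro z
    rw [← Matrix.star_eq_conjTranspose, ← cfc_star, ← cfc_mul _ _ U (hc _) (hc _)]
    congr 1; ext w; split_ifs <;> simp
  · rw [← cfc_sum _ U _ (fun i _ => hc _), ← cfc_one ℂ U]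
    refine cfc_congr fun w hw => ?_
    simp [Finset.sum_apply, hw]
  · simp_rw [← cfc_smul _ _ U (hc _)]
    rw [← cfc_sum _ U _ (fun i _ => hc _)]
    conv_rhs => rw [← cfc_id' ℂ U]
    refine cfc_congr fun w hw => ?_
    simp [Finset.sum_apply, hw]
end Unitary

/-- The sum over `j` of the pullbacks of a `2 × 2` matrix `X` under the maps whose two rows
are the `j`-th rows of `P` and `R`, scaled by `c`. -/
lemma sum_conj_rowPair {m : Type} [Fintype m] (P R : Matrix m m ℂ)
    (X : Matrix (Fin 2) (Fin 2) ℂ) (c : ℂ) (hc : star c * c = 1 / 2) :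
    ∑ j, (Matrix.of ![c • P j, c • R j] : Matrix (Fin 2) m ℂ)ᴴ * X *
        (Matrix.of ![c • P j, c • R j] : Matrix (Fin 2) m ℂ) =
      (1 / 2 : ℂ) • (X 0 0 • (Pᴴ * P) + X 0 1 • (Pᴴ * R) + X 1 0 • (Rᴴ * P)
        + X 1 1 • (Rᴴ * R)) := by
  ext a b
  simp only [Matrix.sum_apply, Matrix.mul_apply, Matrix.smul_apply, Matrix.add_apply,
    Fin.sum_univ_two, Matrix.conjTranspose_apply, Matrix.of_apply, smul_eq_mul,
    Matrix.cons_val_zero, Matrix.cons_val_one, Pi.smul_apply, Finset.mul_sum,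
    ← Finset.sum_add_distrib, StarMul.star_mul, ← hc]
  refine Finset.sum_congr rfl fun j _ => ?_
  ring

/-- Pulling `X` back along the maps with rows `c • Q j` and `c • (Q * B) j`, for a projection
`Q`: the case `R = Q * B` of `sum_conj_rowPair`. -/
lemma sum_conj_frame {m : Type} [Fintype m] {Q B : Matrix m m ℂ}
    (hQ : Qᴴ * Q = Q) (hB : B.IsHermitian) (X : Matrix (Fin 2) (Fin 2) ℂ) (c : ℂ)
    (hc : star c * c = 1 / 2) :
    ∑ j, (Matrix.of ![c • Q j, c • (Q * B) j] : Matrix (Fin 2) m ℂ)ᴴ * X *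
        (Matrix.of ![c • Q j, c • (Q * B) j] : Matrix (Fin 2) m ℂ) =
      (1 / 2 : ℂ) • (X 0 0 • Q + X 0 1 • (Q * B) + X 1 0 • (B * Q) + X 1 1 • (B * Q * B)) := by
  have h1 : Qᴴ * (Q * B) = Q * B := by rw [← mul_assoc, hQ]
  have h2 : (Q * B)ᴴ * Q = B * Q := by
    rw [Matrix.conjTranspose_mul, mul_assoc, hQ, hB]
  have h3 : (Q * B)ᴴ * (Q * B) = B * Q * B := by
    rw [← mul_assoc, h2]
  rw [sum_conj_rowPair Q (Q * B) X c hc, h1, h2, h3, hQ]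

/-- Two reflections on any space are simultaneously pulled back from qubit reflections along
maps `V k` with `∑ k, (V k)ᴴ * V k = 1`. The index `k` runs over pairs of an eigenvalue `z` of
`A * B` and a row of its spectral projection; `B` corresponds to `[[0, 1], [1, 0]]` and `A` to
`[[0, z], [star z, 0]]`. -/
lemma exists_qubit_decomposition_of_reflections {m : Type} [Fintype m] [DecidableEq m]
    {A B : Matrix m m ℂ} (hA : A.IsHermitian) (hAA : A * A = 1)
    (hB : B.IsHermitian) (hBB : B * B = 1) :
    ∃ (K : Type) (_ : Fintype K) (V : K → Matrix (Fin 2) m ℂ)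
      (A' B' : K → Matrix (Fin 2) (Fin 2) ℂ),
      (∀ k, (A' k).IsHermitian ∧ A' k * A' k = 1) ∧
      (∀ k, (B' k).IsHermitian ∧ B' k * B' k = 1) ∧
      ∑ k, (V k)ᴴ * V k = 1 ∧ ∑ k, (V k)ᴴ * A' k * V k = A ∧
      ∑ k, (V k)ᴴ * B' k * V k = B := by
  have hAs : Aᴴ = A := hA
  have hBs : Bᴴ = B := hB
  have hU : A * B ∈ unitary (Matrix m m ℂ) := by
    constructor
    · rw [Matrix.star_eq_conjTranspose, Matrix.conjTranspose_mul, hAs, hBs, mul_assoc,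
        ← mul_assoc A A, hAA, one_mul, hBB]
    · rw [Matrix.star_eq_conjTranspose, Matrix.conjTranspose_mul, hAs, hBs, mul_assoc,
        ← mul_assoc B B, hBB, one_mul, hAA]
  obtain ⟨s, Q, hs, hQ, hQ1, hQU⟩ := exists_spectral_resolution hU
  have hQH : ∀ z, (Q z)ᴴ = Q z := fun z => by
    conv_lhs => rw [← hQ z]
    rw [Matrix.conjTranspose_mul, Matrix.conjTranspose_conjTranspose, hQ]
  have hQU' : ∑ z ∈ s, star z • Q z = B * A := by
    have := congrArg Matrix.conjTranspose hQU
    rw [Matrix.conjTranspose_sum, Matrix.conjTranspose_mul, hAs, hBs] at this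
    rw [← this]
    exact Finset.sum_congr rfl fun z _ => by rw [Matrix.conjTranspose_smul, hQH]
  -- Each projection is covered twice, once by its rows and once by their images under `B`;
  -- the constant `c = 1 / √2` compensates for this.
  set c : ℂ := ((√(1 / 2) : ℝ) : ℂ) with hc
  have hcc : star c * c = 1 / 2 := by
    rw [hc, Complex.star_def, Complex.conj_ofReal, ← Complex.ofReal_mul,
      Real.mul_self_sqrt (by norm_num)]
    norm_num
  have key : ∀ X : ℂ → Matrix (Fin 2) (Fin 2) ℂ,
      ∑ k : s × m, (Matrix.of ![c • Q k.1 k.2, c • (Q k.1 * B) k.2] : Matrix (Fin 2) m ℂ)ᴴ *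
        X k.1 * (Matrix.of ![c • Q k.1 k.2, c • (Q k.1 * B) k.2] : Matrix (Fin 2) m ℂ) =
      ∑ z ∈ s, (1 / 2 : ℂ) • (X z 0 0 • Q z + X z 0 1 • (Q z * B) + X z 1 0 • (B * Q z)
        + X z 1 1 • (B * Q z * B)) := by
    intro X
    rw [Fintype.sum_prod_type, ← Finset.sum_coe_sort s]
    refine Finset.sum_congr rfl fun z _ => ?_
    have := sum_conj_frame (hQ z) hB (X z) c hcc
    dsimp only
    rw [← this]
  have half : ∀ Y : Matrix m m ℂ, (1 / 2 : ℂ) • (Y + Y) = Y := fun Y => by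
    rw [← two_smul ℂ Y, smul_smul]; norm_num
  have hl : ∑ z ∈ s, z • (Q z * B) = A := by
    simp_rw [← Matrix.smul_mul]
    rw [← Finset.sum_mul, hQU, mul_assoc, hBB, mul_one]
  have hr : ∑ z ∈ s, star z • (B * Q z) = A := by
    simp_rw [← Matrix.mul_smul]
    rw [← Finset.mul_sum, hQU', ← mul_assoc, hBB, one_mul]
  refine ⟨s × m, inferInstance, fun k => Matrix.of ![c • Q k.1 k.2, c • (Q k.1 * B) k.2],
    fun k => !![0, (k.1 : ℂ); star (k.1 : ℂ), 0], fun _ => !![0, 1; 1, 0], ?_, ?_, ?_, ?_, ?_⟩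
  · intro k
    have := hs k.1 k.1.2
    have h' : star (k.1 : ℂ) * k.1 = 1 := by rw [mul_comm]; exact this
    constructor
    · ext i j; fin_cases i <;> fin_cases j <;> simp
    · ext i j; fin_cases i <;> fin_cases j <;> simp_all
  · intro k
    constructor
    · ext i j; fin_cases i <;> fin_cases j <;> simp
    · ext i j; fin_cases i <;> fin_cases j <;> simp
  · have := key fun _ => 1
    refine (Finset.sum_congr rfl fun k _ => ?_).trans (this.trans ?_)
    · rw [Matrix.mul_one]
    simp only [Matrix.one_apply_eq, one_smul, ne_eq, zero_ne_one, one_ne_zero, not_false_eq_true,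
      Matrix.one_apply_ne, zero_smul, add_zero, ← Finset.smul_sum, Finset.sum_add_distrib,
      ← Finset.mul_sum, ← Finset.sum_mul, hQ1]
    rw [mul_one, hBB, half]
  · have := key fun z => !![0, z; star z, 0]
    refine this.trans ?_
    simp only [Matrix.of_apply, Matrix.cons_val_zero, Matrix.cons_val_one, Matrix.cons_val',
      zero_smul, zero_add, add_zero, ← Finset.smul_sum, Finset.sum_add_distrib,
      hl, hr, half]
  · have := key fun z => !![0, 1; 1, 0]
    refine this.trans ?_
    simp only [Matrix.of_apply, Matrix.cons_val_zero, Matrix.cons_val_one, Matrix.cons_val',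
      zero_smul, zero_add, add_zero, ← Finset.smul_sum, Finset.sum_add_distrib, one_smul,
      ← Finset.mul_sum, ← Finset.sum_mul, hQ1]
    rw [mul_one, one_mul, half]

lemma posSemidef_half_one_add {A : Matrix (Fin 2) (Fin 2) ℂ} (hA : A.IsHermitian)
    (hAA : A * A = 1) : ((1 / 2 : ℂ) • (1 + A)).PosSemidef := by
  have h := Matrix.posSemidef_conjTranspose_mul_self ((1 / 2 : ℂ) • (1 + A))
  have hA' : Aᴴ = A := hA
  convert h using 1
  rw [Matrix.conjTranspose_smul, Matrix.conjTranspose_add, Matrix.conjTranspose_one, hA',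
    Matrix.smul_mul, Matrix.mul_smul, smul_smul, add_mul, mul_add, mul_add, hAA]
  simp only [one_mul, mul_one]
  rw [show (1 : Matrix (Fin 2) (Fin 2) ℂ) + A + (A + 1) = (2 : ℂ) • (1 + A) by
    rw [two_smul]; abel, smul_smul]
  norm_num

/-- The qubit decomposition of a pair of effects, obtained by restricting that of their
reflection dilations to the first summand. -/
lemma exists_qubit_decomposition_of_effects {m : Type} [Fintype m] [DecidableEq m]
    {E F : Matrix m m ℂ} (hE : E.PosSemidef) (hE' : (1 - E).PosSemidef)
    (hF : F.PosSemidef) (hF' : (1 - F).PosSemidef) :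
    ∃ (K : Type) (_ : Fintype K) (V : K → Matrix (Fin 2) m ℂ)
      (A B : K → Matrix (Fin 2) (Fin 2) ℂ),
      (∀ k, (A k).IsHermitian ∧ A k * A k = 1) ∧
      (∀ k, (B k).IsHermitian ∧ B k * B k = 1) ∧
      ∑ k, (V k)ᴴ * V k = 1 ∧ ∑ k, (V k)ᴴ * A k * V k = E + E - 1 ∧
      ∑ k, (V k)ᴴ * B k * V k = F + F - 1 := by
  obtain ⟨A, hA, hAA, hAE⟩ := exists_reflection_dilation hE hE'
  obtain ⟨B, hB, hBB, hBF⟩ := exists_reflection_dilation hF hF'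
  obtain ⟨K, iK, V, A', B', hA', hB', h1, h2, h3⟩ :=
    exists_qubit_decomposition_of_reflections hA hAA hB hBB
  refine ⟨K, iK, fun k => (V k).submatrix id Sum.inl, A', B', hA', hB', ?_, ?_, ?_⟩
  · ext a b
    have := congrFun (congrFun h1 (Sum.inl a)) (Sum.inl b)
    simpa [Matrix.sum_apply, Matrix.mul_apply, Matrix.one_apply] using this
  · rw [← hAE, ← h2]
    ext a b
    simp [Matrix.sum_apply, Matrix.mul_apply]
  · rw [← hBF, ← h3]
    ext a b
    simp [Matrix.sum_apply, Matrix.mul_apply]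

/-- A party with two dichotomic POVMs is pulled back from parties measuring a qubit. The
equations `d' = 2`, `x = 2`, `o = 2` are hypotheses because in the application the dimensions
and the numbers of settings and outcomes are values of functions. -/
lemma exists_qubit_povm_decomposition {d d' x o : ℕ} (hd' : d' = 2) (hx : x = 2) (ho : o = 2)
    (M : Fin x → Fin o → Matrix (Fin d) (Fin d) ℂ) (hM : ∀ y, IsPOVM (M y)) :
    ∃ (K : Type) (_ : Fintype K) (V : K → Matrix (Fin d') (Fin d) ℂ)
      (M' : K → Fin x → Fin o → Matrix (Fin d') (Fin d') ℂ),
      (∀ k y, IsPOVM (M' k y)) ∧ ∑ k, (V k)ᴴ * V k = 1 ∧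
      ∀ y a, M y a = ∑ k, (V k)ᴴ * M' k y a * V k := by
  subst hd' hx ho
  have hs : ∀ y, M y 0 + M y 1 = 1 := fun y => by rw [← (hM y).2, Fin.sum_univ_two]
  have hs' : ∀ y, M y 1 = 1 - M y 0 := fun y => by rw [← hs y]; abel
  obtain ⟨K, iK, V, A, B, hA, hB, h1, h2, h3⟩ :=
    exists_qubit_decomposition_of_effects ((hM 0).1 0) (hs' 0 ▸ (hM 0).1 1)
      ((hM 1).1 0) (hs' 1 ▸ (hM 1).1 1)
  let C : K → Fin 2 → Matrix (Fin 2) (Fin 2) ℂ := fun k => ![A k, B k]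
  have hC : ∀ k y, (C k y).IsHermitian ∧ C k y * C k y = 1 := by
    intro k y; fin_cases y
    · exact hA k
    · exact hB k
  have hCM : ∀ y, ∑ k, (V k)ᴴ * C k y * V k = M y 0 + M y 0 - 1 := by
    intro y; fin_cases y
    · exact h2
    · exact h3
  have half : ∀ Y : Matrix (Fin d) (Fin d) ℂ, (1 / 2 : ℂ) • (Y + Y) = Y := fun Y => by
    rw [← two_smul ℂ Y, smul_smul]; norm_num
  refine ⟨K, iK, V, fun k y => ![(1 / 2 : ℂ) • (1 + C k y), (1 / 2 : ℂ) • (1 + -C k y)],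
    ?_, h1, ?_⟩
  · intro k y
    constructor
    · intro a; fin_cases a
      · exact posSemidef_half_one_add (hC k y).1 (hC k y).2
      · exact posSemidef_half_one_add (hC k y).1.neg (by rw [neg_mul_neg, (hC k y).2])
    · rw [Fin.sum_univ_two]
      simp only [Matrix.cons_val_zero, Matrix.cons_val_one]
      rw [← smul_add, show (1 : Matrix (Fin 2) (Fin 2) ℂ) + C k y + (1 + -C k y)
        = (2 : ℂ) • 1 by rw [two_smul]; abel, smul_smul]
      norm_num
  · intro y a
    fin_cases a
    · change M y 0 = ∑ k, (V k)ᴴ * ((1 / 2 : ℂ) • (1 + C k y)) * V k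
      simp only [Matrix.mul_smul, Matrix.smul_mul,
        Matrix.mul_add, Matrix.add_mul, Matrix.mul_one, ← Finset.smul_sum,
        Finset.sum_add_distrib, h1, hCM]
      rw [add_sub_cancel, half]
    · change M y 1 = ∑ k, (V k)ᴴ * ((1 / 2 : ℂ) • (1 + -C k y)) * V k
      simp only [Matrix.mul_smul, Matrix.smul_mul,
        Matrix.mul_add, Matrix.add_mul, Matrix.mul_one, ← Finset.smul_sum, Matrix.mul_neg,
        Matrix.neg_mul, Finset.sum_neg_distrib, Finset.sum_add_distrib, h1, hCM]
      rw [hs' y, show (1 : Matrix (Fin d) (Fin d) ℂ) + -(M y 0 + M y 0 - 1)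
        = (1 - M y 0) + (1 - M y 0) by abel, half]

/-! ### Ensembles as measurements on a purification -/

/-- A positive semidefinite `T` has a square root `B` with a commuting pseudoinverse `C`;
`B * C` is then the support projection of `T`. -/
lemma exists_sqrt_and_pseudoinverse {m : Type} [Fintype m] [DecidableEq m] {T : Matrix m m ℂ}
    (hT : T.PosSemidef) :
    ∃ B C : Matrix m m ℂ, B.IsHermitian ∧ C.IsHermitian ∧ B * B = T ∧ B * C = C * B ∧
      B * C * B = B := by
  have hs : IsSelfAdjoint T := hT.isHermitian
  refine ⟨cfc (fun t : ℝ => √t) T, cfc (fun t : ℝ => (√t)⁻¹) T, cfc_isHermitian _ _,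
    cfc_isHermitian _ _, ?_, ?_, ?_⟩
  · rw [cfc_mul_matrix]
    conv_rhs => rw [← cfc_id' ℝ T]
    exact cfc_congr fun t ht => Real.mul_self_sqrt (spectrum_nonneg_of_posSemidef hT ht)
  · rw [cfc_mul_matrix, cfc_mul_matrix]
    simp only [mul_comm]
  · rw [cfc_mul_matrix, cfc_mul_matrix]
    congr 1; ext t
    exact mul_inv_mul_cancel _

lemma posSemidef_of_isHermitian_of_idempotent {m : Type} [Fintype m] {A : Matrix m m ℂ}
    (hA : A.IsHermitian) (hAA : A * A = A) : A.PosSemidef := by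
  have h := Matrix.posSemidef_conjTranspose_mul_self A
  rwa [hA, hAA] at h

lemma eq_zero_of_sum_eq_zero_of_posSemidef {m ι : Type} [Fintype m] [Fintype ι]
    {A : ι → Matrix m m ℂ} (hA : ∀ i, (A i).PosSemidef) (h : ∑ i, A i = 0) (i : ι) :
    A i = 0 := by
  have h' : ∑ i, (A i).trace = 0 := by rw [← Matrix.trace_sum, h, Matrix.trace_zero]
  rw [Finset.sum_eq_zero_iff_of_nonneg fun i _ => (hA i).trace_nonneg] at h'
  exact (hA i).trace_eq_zero_iff.1 (h' i (Finset.mem_univ i))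

/-- A vector isotropic for a positive semidefinite form lies in its kernel. -/
lemma posSemidef_mul_eq_zero {m : Type} [Fintype m] [DecidableEq m] {A R : Matrix m m ℂ}
    (hA : A.PosSemidef) (h : Rᴴ * A * R = 0) : A * R = 0 := by
  obtain ⟨B, -, hB, -, hBB, -⟩ := exists_sqrt_and_pseudoinverse hA
  have h0 : (B * R)ᴴ * (B * R) = 0 := by
    rw [Matrix.conjTranspose_mul, hB, mul_assoc, ← mul_assoc B B, hBB, ← mul_assoc, h]
  rw [← hBB, mul_assoc, Matrix.conjTranspose_mul_self_eq_zero.1 h0, mul_zero]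

/-- If the `S a ≥ 0` sum to `T = B ^ 2`, then `C * S a * C`, with `C` the pseudoinverse of
`B`, sum to the support projection of `T`. Adding the kernel projection `R` to one outcome gives
a POVM which reproduces the `S a`. The transpose matches the convention of `steer_pure`. -/
lemma exists_povm_of_ensemble {m : Type} [Fintype m] [DecidableEq m] {T B C : Matrix m m ℂ}
    (hB : B.IsHermitian) (hC : C.IsHermitian) (hBB : B * B = T) (hBC : B * C = C * B)
    (hBCB : B * C * B = B) {q : ℕ} (hq : 0 < q) (S : Fin q → Matrix m m ℂ)
    (hS : ∀ a, (S a).PosSemidef) (hsum : ∑ a, S a = T) :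
    ∃ N : Fin q → Matrix m m ℂ, IsPOVM N ∧ ∀ a, B * (N a)ᵀ * B = S a := by
  have hBs : Bᴴ = B := hB
  have hCs : Cᴴ = C := hC
  set R : Matrix m m ℂ := 1 - B * C with hR
  have hRH : Rᴴ = R := by
    rw [hR, Matrix.conjTranspose_sub, Matrix.conjTranspose_one, Matrix.conjTranspose_mul, hBs,
      hCs, hBC]
  have hRB : R * B = 0 := by rw [hR, sub_mul, one_mul, hBCB, sub_self]
  have hBR : B * R = 0 := by rw [hR, mul_sub, mul_one, hBC, ← mul_assoc, hBCB, sub_self]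
  have hRR : R * R = R := by
    calc R * R = (1 - B * C) * R := rfl
      _ = R := by rw [sub_mul, one_mul, hBC, mul_assoc, hBR, mul_zero, sub_zero]
  have hRpsd : R.PosSemidef := posSemidef_of_isHermitian_of_idempotent hRH hRR
  -- As `T * R = 0` and the `S a` are positive, each `S a` vanishes on the kernel of `T`.
  have hSR : ∀ a, S a * R = 0 := by
    intro a
    refine posSemidef_mul_eq_zero (hS a) ?_
    refine eq_zero_of_sum_eq_zero_of_posSemidef
      (fun a => (hS a).conjTranspose_mul_mul_same R) ?_ a
    rw [← Finset.sum_mul, ← Finset.mul_sum, hsum, ← hBB, mul_assoc, mul_assoc B, hBR, mul_zero,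
      mul_zero]
  have hRS : ∀ a, R * S a = 0 := by
    intro a
    have := congrArg Matrix.conjTranspose (hSR a)
    rwa [Matrix.conjTranspose_mul, hRH, (hS a).1, Matrix.conjTranspose_zero] at this
  have hSBC : ∀ a, S a * (C * B) = S a := by
    intro a
    have := hSR a
    rw [hR, mul_sub, mul_one, sub_eq_zero] at this
    rw [← hBC, ← this]
  have hBCS : ∀ a, B * C * S a = S a := by
    intro a
    have := hRS a
    rw [hR, sub_mul, one_mul, sub_eq_zero] at this
    exact this.symm
  let L : Fin q → Matrix m m ℂ := fun a => C * S a * C + if a = ⟨0, hq⟩ then R else 0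
  refine ⟨fun a => (L a)ᵀ, ⟨fun a => Matrix.PosSemidef.transpose ?_, ?_⟩, fun a => ?_⟩
  · have h1 := (hS a).conjTranspose_mul_mul_same C
    rw [hCs] at h1
    refine h1.add ?_
    split_ifs
    · exact hRpsd
    · exact Matrix.PosSemidef.zero
  · rw [← Matrix.transpose_sum, ← Matrix.transpose_one]
    congr 1
    simp only [L]
    rw [Finset.sum_add_distrib, ← Finset.sum_mul, ← Finset.mul_sum, hsum, Finset.sum_ite_eq',
      if_pos (Finset.mem_univ _), ← hBB, ← mul_assoc, ← hBC, hBCB, hR]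
    abel
  · rw [Matrix.transpose_transpose]
    simp only [L]
    rw [mul_add, add_mul]
    have h0 : B * (if a = ⟨0, hq⟩ then R else 0) * B = 0 := by
      split_ifs
      · rw [hBR, zero_mul]
      · rw [mul_zero, zero_mul]
    rw [h0, add_zero, ← mul_assoc, ← mul_assoc, hBCS, mul_assoc, hSBC]

/-- The unnormalized state `tr₂ (ρ (1 ⊗ N))` of the first factor, conditioned on the effect `N`
being found on the second factor. -/
def steer {k l : Type} [Fintype l] (ρ : Matrix (k × l) (k × l) ℂ) (N : Matrix l l ℂ) :
    Matrix k k ℂ :=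
  Matrix.of fun r c => ∑ s, ∑ t, ρ (r, s) (c, t) * N t s

/-- With `N = Q * Q`, the conditional state is the sum over `j` of `(1 ⊗ ⟨Q j|) ρ (1 ⊗ ⟨Q j|)ᴴ`
where `Q j` is the `j`-th row of `Q`. -/
lemma posSemidef_steer {k l : Type} [Fintype k] [Fintype l] [DecidableEq k] [DecidableEq l]
    {ρ : Matrix (k × l) (k × l) ℂ} (hρ : ρ.PosSemidef) {N : Matrix l l ℂ} (hN : N.PosSemidef) :
    (steer ρ N).PosSemidef := by
  obtain ⟨Q, -, hQ, -, hQQ, -⟩ := exists_sqrt_and_pseudoinverse hN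
  have h : steer ρ N = ∑ j, (Matrix.of fun r (p : k × l) => if r = p.1 then Q j p.2 else 0) * ρ *
      (Matrix.of fun r (p : k × l) => if r = p.1 then Q j p.2 else 0)ᴴ := by
    ext r c
    have hQe : ∀ j t, star (Q j t) = Q t j := fun j t => hQ.apply t j
    simp only [steer, Matrix.sum_apply, Matrix.mul_apply, Matrix.of_apply, Fintype.sum_prod_type,
      Matrix.conjTranspose_apply, ite_mul, zero_mul, apply_ite star, star_zero, mul_ite, mul_zero,
      Finset.sum_ite_irrel, Finset.sum_const_zero, Finset.sum_ite_eq, Finset.mem_univ, if_true,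
      hQe, ← hQQ]
    simp only [Finset.mul_sum, Finset.sum_mul]
    conv_lhs => rw [Finset.sum_comm]
    conv_rhs => rw [Finset.sum_comm]
    refine Finset.sum_congr rfl fun t _ => ?_
    rw [Finset.sum_comm]
    refine Finset.sum_congr rfl fun j _ => Finset.sum_congr rfl fun s _ => ?_
    ring
  rw [h]
  exact Matrix.posSemidef_sum _ fun j _ => hρ.mul_mul_conjTranspose_same _

lemma trace_mul_kronecker {k l : Type} [Fintype k] [Fintype l]
    (ρ : Matrix (k × l) (k × l) ℂ) (A : Matrix k k ℂ) (N : Matrix l l ℂ) :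
    (ρ * (A ⊗ₖ N)).trace = (steer ρ N * A).trace := by
  simp only [steer, Matrix.trace, Matrix.diag, Matrix.mul_apply, Fintype.sum_prod_type,
    Matrix.kroneckerMap_apply, Matrix.of_apply, Finset.sum_mul]
  refine Finset.sum_congr rfl fun r _ => ?_
  rw [Finset.sum_comm]
  refine Finset.sum_congr rfl fun c _ => Finset.sum_congr rfl fun s _ =>
    Finset.sum_congr rfl fun t _ => ?_
  ring

lemma steer_sum {k l ι : Type} [Fintype l] [Fintype ι] (ρ : Matrix (k × l) (k × l) ℂ)
    (N : ι → Matrix l l ℂ) : ∑ a, steer ρ (N a) = steer ρ (∑ a, N a) := by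
  ext r c
  simp only [steer, Matrix.sum_apply, Matrix.of_apply, Finset.mul_sum]
  rw [Finset.sum_comm]
  exact Finset.sum_congr rfl fun s _ => Finset.sum_comm

/-- A pure state on `k × l` with coefficient matrix `X` steers to `X * Nᵀ * Xᴴ`. -/
lemma steer_pure {k l : Type} [Fintype l] (X : Matrix k l ℂ) (N : Matrix l l ℂ) :
    steer (Matrix.vecMulVec (fun p : k × l => X p.1 p.2) (star fun p : k × l => X p.1 p.2)) N
      = X * Nᵀ * Xᴴ := by
  ext r c
  simp only [steer, Matrix.of_apply, Matrix.vecMulVec_apply, Matrix.mul_apply, Finset.sum_mul,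
    Matrix.transpose_apply, Matrix.conjTranspose_apply, Pi.star_apply]
  rw [Finset.sum_comm]
  refine Finset.sum_congr rfl fun s _ => Finset.sum_congr rfl fun t _ => ?_
  ring

/-! ### Tensor products over the first parties -/

/-- The tensor product of a family of rectangular matrices, indexed by multi-indices. -/
def piTensor {n : ℕ} {a b : Fin n → ℕ} (A : ∀ i, Matrix (Fin (a i)) (Fin (b i)) ℂ) :
    Matrix (∀ i, Fin (a i)) (∀ i, Fin (b i)) ℂ :=
  Matrix.of fun r c => ∏ i, A i (r i) (c i)

lemma piTensor_mul {n : ℕ} {a b c : Fin n → ℕ} (A : ∀ i, Matrix (Fin (a i)) (Fin (b i)) ℂ)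
    (B : ∀ i, Matrix (Fin (b i)) (Fin (c i)) ℂ) :
    piTensor A * piTensor B = piTensor fun i => A i * B i := by
  ext r s
  simp only [piTensor, Matrix.mul_apply, Matrix.of_apply, Fintype.prod_sum,
    Finset.prod_mul_distrib]

lemma piTensor_conjTranspose {n : ℕ} {a b : Fin n → ℕ}
    (A : ∀ i, Matrix (Fin (a i)) (Fin (b i)) ℂ) :
    (piTensor A)ᴴ = piTensor fun i => (A i)ᴴ := by
  ext r s
  simp [piTensor, Matrix.conjTranspose_apply]

lemma piTensor_one {n : ℕ} {a : Fin n → ℕ} :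
    piTensor (fun i => (1 : Matrix (Fin (a i)) (Fin (a i)) ℂ)) = 1 := by
  ext r s
  simp only [piTensor, Matrix.of_apply, Matrix.one_apply, funext_iff,
    Finset.prod_ite_zero, Finset.mem_univ, forall_const, Finset.prod_const_one]

lemma sum_piTensor {n : ℕ} {a b : Fin n → ℕ} {K : Fin n → Type} [∀ i, Fintype (K i)]
    (A : ∀ i, K i → Matrix (Fin (a i)) (Fin (b i)) ℂ) :
    ∑ k : ∀ i, K i, piTensor (fun i => A i (k i)) = piTensor fun i => ∑ k, A i k := by
  ext r s
  simp only [piTensor, Matrix.sum_apply, Matrix.of_apply, Fintype.prod_sum]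

/-- Splitting a multi-index of `n + 1` parties into the indices of the first `n` parties and
that of the last one. -/
def splitLast {n : ℕ} (d : Fin (n + 1) → ℕ) :
    (∀ i : Fin n, Fin (d i.castSucc)) × Fin (d (Fin.last n)) ≃ ∀ i, Fin (d i) :=
  (Equiv.prodComm _ _).trans (Fin.snocEquiv fun i => Fin (d i))

lemma splitLast_castSucc {n : ℕ} (d : Fin (n + 1) → ℕ) (p) (i : Fin n) :
    splitLast d p i.castSucc = p.1 i := by
  simp [splitLast]

lemma splitLast_last {n : ℕ} (d : Fin (n + 1) → ℕ) (p) :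
    splitLast d p (Fin.last n) = p.2 := by
  simp [splitLast]

lemma trace_submatrix_equiv {m k : Type} [Fintype m] [Fintype k] (e : k ≃ m)
    (A : Matrix m m ℂ) : (A.submatrix e e).trace = A.trace :=
  e.sum_comp fun i => A i i

/-- The last party's effect may be absorbed into the state, leaving a trace over the first
`n` parties only. -/
lemma trace_mul_tensorN {n : ℕ} (d : Fin (n + 1) → ℕ)
    (ρ : Matrix (∀ i, Fin (d i)) (∀ i, Fin (d i)) ℂ)
    (M : ∀ i, Matrix (Fin (d i)) (Fin (d i)) ℂ) :
    (ρ * tensorN d M).trace =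
      (steer (ρ.submatrix (splitLast d) (splitLast d)) (M (Fin.last n)) *
        piTensor fun i : Fin n => M i.castSucc).trace := by
  rw [← trace_mul_kronecker, ← trace_submatrix_equiv (splitLast d),
    ← Matrix.submatrix_mul_equiv _ _ _ (splitLast d)]
  congr 2
  ext p q
  simp [tensorN, piTensor, Fin.prod_univ_castSucc, splitLast_castSucc, splitLast_last]

lemma trace_steer_one {k l : Type} [Fintype k] [Fintype l] [DecidableEq k] [DecidableEq l]
    (ρ : Matrix (k × l) (k × l) ℂ) : (steer ρ 1).trace = ρ.trace := by
  have := trace_mul_kronecker ρ 1 1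
  rw [Matrix.one_kronecker_one, mul_one, mul_one] at this
  exact this.symm

lemma im_trace_mul_eq_zero {m : Type} [Fintype m] {A B : Matrix m m ℂ} (hA : A.IsHermitian)
    (hB : B.IsHermitian) : (A * B).trace.im = 0 := by
  rw [← Complex.conj_eq_iff_im, ← Complex.star_def, ← Matrix.trace_conjTranspose,
    Matrix.conjTranspose_mul, hA, hB, Matrix.trace_mul_comm]

/-! ### Convex decomposition of a quantum correlation -/

/-- If the last party steers the first `n` parties to ensembles `S y a` with common average
`T`, and its space has the dimension of theirs, then the correlation is realized by a pure state:
the purification of `T` with coefficient matrix `√T`. -/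
lemma realizesPure_of_assemblage {n : ℕ} {x o d : Fin (n + 1) → ℕ}
    (e : (∀ i : Fin n, Fin (d i.castSucc)) ≃ Fin (d (Fin.last n)))
    {T : Matrix (∀ i : Fin n, Fin (d i.castSucc)) (∀ i : Fin n, Fin (d i.castSucc)) ℂ}
    (hT : T.PosSemidef) (hT1 : T.trace = 1)
    (S : Fin (x (Fin.last n)) → Fin (o (Fin.last n)) →
      Matrix (∀ i : Fin n, Fin (d i.castSucc)) (∀ i : Fin n, Fin (d i.castSucc)) ℂ)
    (hS : ∀ y a, (S y a).PosSemidef) (hST : ∀ y, ∑ a, S y a = T)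
    (L : ∀ i : Fin n, Fin (x i.castSucc) → Fin (o i.castSucc) →
      Matrix (Fin (d i.castSucc)) (Fin (d i.castSucc)) ℂ) (hL : ∀ i y, IsPOVM (L i y))
    (P : (∀ i, Fin (x i)) → (∀ i, Fin (o i)) → ℝ)
    (hP : ∀ xs as, (P xs as : ℂ) = (S (xs (Fin.last n)) (as (Fin.last n)) *
      piTensor fun i : Fin n => L i (xs i.castSucc) (as i.castSucc)).trace) :
    RealizesPure x o d P := by
  obtain ⟨B, C, hB, hC, hBB, hBC, hBCB⟩ := exists_sqrt_and_pseudoinverse hT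
  have hN : ∀ y, ∃ N : Fin (o (Fin.last n)) → Matrix _ _ ℂ,
      IsPOVM N ∧ ∀ a, B * (N a)ᵀ * B = S y a := by
    intro y
    refine exists_povm_of_ensemble hB hC hBB hBC hBCB ?_ (S y) (hS y) (hST y)
    -- There is an outcome to carry the kernel projection: otherwise `T` would be an empty sum,
    -- contradicting `tr T = 1`.
    rcases Nat.eq_zero_or_pos (o (Fin.last n)) with h0 | h0
    · exfalso
      have : IsEmpty (Fin (o (Fin.last n))) := by rw [h0]; infer_instance
      have h := hST y
      rw [Finset.univ_eq_empty, Finset.sum_empty] at h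
      rw [← h, Matrix.trace_zero] at hT1
      exact zero_ne_one hT1
    · exact h0
  choose N hN hNS using hN
  refine ⟨fun p => B (fun i => p i.castSucc) (e.symm (p (Fin.last n))), ?_,
    Fin.snoc (α := fun i => Fin (x i) → Fin (o i) → Matrix (Fin (d i)) (Fin (d i)) ℂ) L
      (fun y a => (N y a).submatrix e.symm e.symm), ?_, ?_⟩
  · rw [← (splitLast d).sum_comp]
    simp only [splitLast_castSucc, splitLast_last, Fintype.sum_prod_type]
    have h : ∀ r, ∑ s, Complex.normSq (B r (e.symm s)) = ∑ c, Complex.normSq (B r c) :=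
      fun r => e.symm.sum_comp fun c => Complex.normSq (B r c)
    simp only [h]
    rw [← hBB] at hT1
    rw [← Complex.ofReal_inj, Complex.ofReal_one, ← hT1]
    push_cast
    simp only [Matrix.trace, Matrix.diag, Matrix.mul_apply, Complex.normSq_eq_conj_mul_self]
    refine Finset.sum_congr rfl fun r _ => Finset.sum_congr rfl fun c _ => ?_
    rw [← hB.apply c r, Complex.star_def, mul_comm]
  · intro i
    refine Fin.lastCases (fun y => ?_) (fun i y => ?_) i
    · rw [Fin.snoc_last]
      refine ⟨fun a => ((hN y).1 a).submatrix _, ?_⟩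
      ext a b
      have := congrFun (congrFun (hN y).2 (e.symm a)) (e.symm b)
      simpa [Matrix.sum_apply, Matrix.one_apply] using this
    · rw [Fin.snoc_castSucc]
      exact hL i y
  · intro xs as
    rw [trace_mul_tensorN, hP]
    simp only [Fin.snoc_castSucc, Fin.snoc_last]
    congr 2
    have h := steer_pure (B.submatrix id e.symm)
      ((N (xs (Fin.last n)) (as (Fin.last n))).submatrix e.symm e.symm)
    rw [Matrix.transpose_submatrix, Matrix.conjTranspose_submatrix,
      Matrix.submatrix_mul_equiv, Matrix.submatrix_mul_equiv, hB, hNS,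
      Matrix.submatrix_id_id] at h
    rw [← h]
    congr 1
    ext p q
    simp [Matrix.vecMulVec_apply, splitLast_castSucc, splitLast_last]

/-- Every quantum correlation is a convex combination of correlations of pure states in
which the first `n` parties hold qubits and the last one a space of dimension `2 ^ n`. -/
lemma quantumSet_subset_convexHull {n : ℕ} {x o d' : Fin (n + 1) → ℕ}
    (hx : ∀ i : Fin n, x i.castSucc = 2) (ho : ∀ i : Fin n, o i.castSucc = 2)
    (hd : ∀ i : Fin n, d' i.castSucc = 2) (hdl : d' (Fin.last n) = 2 ^ n) :
    QuantumSet x o ⊆ convexHull ℝ {P | RealizesPure x o d' P} := by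
  rintro P ⟨d, ρ, ⟨hρ, hρ1⟩, M, hM, hP⟩
  choose K iK V M' hM' hV hMV using fun i : Fin n =>
    exists_qubit_povm_decomposition (hd i) (hx i) (ho i) (M i.castSucc) (hM i.castSucc)
  have e : (∀ i : Fin n, Fin (d' i.castSucc)) ≃ Fin (d' (Fin.last n)) := by
    refine Fintype.equivOfCardEq ?_
    rw [Fintype.card_pi, Fintype.card_fin, hdl]
    simp [hd]
  set ρ' := ρ.submatrix (splitLast d) (splitLast d) with hρ'
  have hρ'psd : ρ'.PosSemidef := hρ.submatrix _
  set S := fun y a => steer ρ' (M (Fin.last n) y a) with hSdef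
  have hS : ∀ y a, (S y a).PosSemidef := fun y a => posSemidef_steer hρ'psd ((hM _ y).1 a)
  set T := steer ρ' 1 with hTdef
  have hT : T.PosSemidef := posSemidef_steer hρ'psd Matrix.PosSemidef.one
  have hT1 : T.trace = 1 := by rw [hTdef, trace_steer_one, hρ', trace_submatrix_equiv, hρ1]
  have hST : ∀ y, ∑ a, S y a = T := fun y => by
    simp only [hSdef]; rw [steer_sum, (hM _ y).2]
  let W : (∀ i, K i) →
      Matrix (∀ i : Fin n, Fin (d' i.castSucc)) (∀ i : Fin n, Fin (d i.castSucc)) ℂ :=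
    fun k => piTensor fun i => V i (k i)
  have hWW : ∑ k, (W k)ᴴ * W k = 1 := by
    simp only [W, piTensor_conjTranspose, piTensor_mul]
    rw [sum_piTensor (fun i k => (V i k)ᴴ * V i k)]
    simp only [hV]
    exact piTensor_one
  let A : (∀ i, K i) → (∀ i, Fin (x i)) → (∀ i, Fin (o i)) →
      Matrix (∀ i : Fin n, Fin (d' i.castSucc)) (∀ i : Fin n, Fin (d' i.castSucc)) ℂ :=
    fun k xs as => piTensor fun i => M' i (k i) (xs i.castSucc) (as i.castSucc)
  have hAH : ∀ k xs as, (A k xs as).IsHermitian := by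
    intro k xs as
    rw [Matrix.IsHermitian, piTensor_conjTranspose]
    congr 1; ext1 i
    exact ((hM' i (k i) (xs i.castSucc)).1 _).1
  have hWA : ∀ xs as, (piTensor fun i : Fin n => M i.castSucc (xs i.castSucc) (as i.castSucc)) =
      ∑ k, (W k)ᴴ * A k xs as * W k := by
    intro xs as
    simp only [W, A, piTensor_conjTranspose, piTensor_mul]
    rw [sum_piTensor (fun i k => (V i k)ᴴ * M' i k (xs i.castSucc) (as i.castSucc) * V i k)]
    simp only [hMV]
  have hpsd : ∀ k {Y : Matrix (∀ i : Fin n, Fin (d i.castSucc)) (∀ i : Fin n, Fin (d i.castSucc)) ℂ},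
      Y.PosSemidef → (W k * Y * (W k)ᴴ).PosSemidef := fun k Y hY =>
    hY.mul_mul_conjTranspose_same _
  -- The weight of the piece `k` of the decomposition.
  let p : (∀ i, K i) → ℝ := fun k => (W k * T * (W k)ᴴ).trace.re
  have hp0 : ∀ k, 0 ≤ p k := fun k => (Complex.nonneg_iff.1 (hpsd k hT).trace_nonneg).1
  have hpc : ∀ k, (p k : ℂ) = (W k * T * (W k)ᴴ).trace := fun k =>
    Complex.ext rfl (Complex.nonneg_iff.1 (hpsd k hT).trace_nonneg).2
  have hcyc : ∀ k (Y : Matrix (∀ i : Fin n, Fin (d i.castSucc)) (∀ i : Fin n, Fin (d i.castSucc)) ℂ)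
      (Z : Matrix (∀ i : Fin n, Fin (d' i.castSucc)) (∀ i : Fin n, Fin (d' i.castSucc)) ℂ),
      (W k * Y * (W k)ᴴ * Z).trace = (Y * ((W k)ᴴ * Z * W k)).trace := by
    intro k Y Z
    rw [Matrix.mul_assoc, Matrix.mul_assoc, Matrix.trace_mul_comm, Matrix.mul_assoc]
  have hp1 : ∑ k, p k = 1 := by
    rw [← Complex.ofReal_inj]
    push_cast
    simp only [hpc]
    have h : ∀ k, (W k * T * (W k)ᴴ).trace = (T * ((W k)ᴴ * W k)).trace := by
      intro k
      rw [Matrix.mul_assoc, Matrix.trace_mul_comm, Matrix.mul_assoc]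
    simp only [h]
    rw [← Matrix.trace_sum, ← Finset.mul_sum, hWW, mul_one, hT1]
  have hSW : ∀ k y, ∑ a, W k * S y a * (W k)ᴴ = W k * T * (W k)ᴴ := by
    intro k y
    rw [← Matrix.sum_mul, ← Matrix.mul_sum, hST]
  -- The normalized correlation of the piece `k`. Pieces of weight zero, where the inverse has
  -- a junk value, do not occur in the convex combination.
  let R : (∀ i, K i) → (∀ i, Fin (x i)) → (∀ i, Fin (o i)) → ℝ := fun k xs as =>
    (((p k)⁻¹ : ℂ) • (W k * S (xs (Fin.last n)) (as (Fin.last n)) * (W k)ᴴ) * A k xs as).trace.re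
  have hc : ∀ k, (0 : ℂ) ≤ (p k : ℂ)⁻¹ := fun k => by
    rw [← Complex.ofReal_inv]
    exact Complex.zero_le_real.2 (inv_nonneg.2 (hp0 k))
  have hRc : ∀ k xs as, (R k xs as : ℂ) =
      (((p k)⁻¹ : ℂ) • (W k * S (xs (Fin.last n)) (as (Fin.last n)) * (W k)ᴴ) * A k xs as).trace := by
    intro k xs as
    refine Complex.ext rfl ?_
    rw [im_trace_mul_eq_zero ((hpsd k (hS _ _)).smul (hc k)).1 (hAH k xs as), Complex.ofReal_im]
  have hR : ∀ k, p k ≠ 0 → RealizesPure x o d' (R k) := by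
    intro k hk
    refine realizesPure_of_assemblage e (T := ((p k)⁻¹ : ℂ) • (W k * T * (W k)ᴴ))
      ((hpsd k hT).smul (hc k)) ?_
      (fun y a => ((p k)⁻¹ : ℂ) • (W k * S y a * (W k)ᴴ))
      (fun y a => (hpsd k (hS y a)).smul (hc k)) (fun y => ?_)
      (fun i => M' i (k i)) (fun i y => hM' i (k i) y) (R k) (hRc k)
    · rw [Matrix.trace_smul, ← hpc, smul_eq_mul, inv_mul_cancel₀ (by exact_mod_cast hk)]
    · rw [← Finset.smul_sum, hSW]
  have hzero : ∀ k, p k = 0 → ∀ y a, W k * S y a * (W k)ᴴ = 0 := by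
    intro k hk y
    refine eq_zero_of_sum_eq_zero_of_posSemidef (fun a => hpsd k (hS y a)) ?_
    rw [hSW, ← (hpsd k hT).trace_eq_zero_iff, ← hpc, hk, Complex.ofReal_zero]
  have hPsum : P = ∑ k with p k ≠ 0, p k • R k := by
    have hfil : ∑ k with p k ≠ 0, p k • R k = ∑ k, p k • R k :=
      Finset.sum_filter_of_ne fun k _ h hk => h (by rw [hk, zero_smul])
    rw [hfil]
    funext xs as
    rw [← Complex.ofReal_inj, hP, trace_mul_tensorN, hWA, Finset.mul_sum, Matrix.trace_sum]
    simp only [Finset.sum_apply, Pi.smul_apply, smul_eq_mul]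
    push_cast
    refine Finset.sum_congr rfl fun k _ => ?_
    rw [← hcyc, hRc]
    by_cases hk : p k = 0
    · rw [hk, Complex.ofReal_zero, zero_mul]
      have := hzero k hk (xs (Fin.last n)) (as (Fin.last n))
      simp only [hSdef] at this
      rw [this, zero_mul, Matrix.trace_zero]
    · rw [Matrix.smul_mul, Matrix.trace_smul, smul_eq_mul,
        mul_inv_cancel_left₀ (by exact_mod_cast hk)]
  rw [hPsum]
  refine (convex_convexHull ℝ _).sum_mem (fun k _ => hp0 k) ?_ fun k hk =>
    subset_convexHull ℝ _ (hR k (Finset.mem_filter.1 hk).2)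
  rw [Finset.sum_filter_ne_zero, hp1]

lemma realizesPure_realizes {N : ℕ} {x o d : Fin N → ℕ}
    {P : (∀ i, Fin (x i)) → (∀ i, Fin (o i)) → ℝ} (h : RealizesPure x o d P) :
    Realizes x o d P := by
  obtain ⟨ψ, hψ, M, hM, hP⟩ := h
  refine ⟨_, ⟨Matrix.posSemidef_vecMulVec_self_star ψ, ?_⟩, M, hM, hP⟩
  rw [Matrix.trace_vecMulVec, dotProduct, ← Complex.ofReal_one, ← hψ]
  push_cast
  simp only [Pi.star_apply, Complex.star_def, Complex.mul_conj]

theorem sup_convex_function_attained_on_bounded_dimension_pure_states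
    (n : ℕ) (x o : Fin (n + 1) → ℕ)
    (hx : ∀ i : Fin n, x i.castSucc = 2) (ho : ∀ i : Fin n, o i.castSucc = 2)
    (f : ((∀ i, Fin (x i)) → (∀ i, Fin (o i)) → ℝ) → ℝ)
    (hf : ConvexOn ℝ Set.univ f) :
    sSup (f '' QuantumSet x o) =
      sSup (f '' {P | RealizesPure x o (Fin.snoc (fun _ : Fin n => 2) (2 ^ n)) P}) := by
  have hsub : {P | RealizesPure x o (Fin.snoc (fun _ : Fin n => 2) (2 ^ n)) P} ⊆
      QuantumSet x o := fun P hP => ⟨_, realizesPure_realizes hP⟩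
  have hcof : ∀ P ∈ QuantumSet x o,
      ∃ P' ∈ {P | RealizesPure x o (Fin.snoc (fun _ : Fin n => 2) (2 ^ n)) P}, f P ≤ f P' :=
    fun P hP => hf.exists_ge_of_mem_convexHull (Set.subset_univ _)
      (quantumSet_subset_convexHull hx ho (by simp) (by simp) hP)
  have hub : upperBounds (f '' QuantumSet x o) = upperBounds
      (f '' {P | RealizesPure x o (Fin.snoc (fun _ : Fin n => 2) (2 ^ n)) P}) := by
    refine Set.Subset.antisymm (upperBounds_mono_set (Set.image_mono hsub)) ?_
    rintro b hb _ ⟨P, hP, rfl⟩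
    obtain ⟨P', hP', hle⟩ := hcof P hP
    exact hle.trans (hb ⟨P', hP', rfl⟩)
  rcases (QuantumSet x o).eq_empty_or_nonempty with h0 | ⟨P, hP⟩
  · rw [Set.subset_eq_empty hsub h0, h0]
  obtain ⟨P', hP', -⟩ := hcof P hP
  by_cases hb : BddAbove (f '' QuantumSet x o)
  · have hne : (f '' QuantumSet x o).Nonempty := ⟨f P, P, hP, rfl⟩
    have hlub := isLUB_csSup hne hb
    rw [IsLUB, hub] at hlub
    exact (IsLUB.csSup_eq hlub ⟨f P', P', hP', rfl⟩).symm
  · -- Both images are unbounded above, so both suprema take the junk value `0`.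
    rw [Real.sSup_of_not_bddAbove hb]
    rw [BddAbove, hub] at hb
    exact (Real.sSup_of_not_bddAbove hb).symm
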